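/- arXiv:2502.17067 — 4 statements merged into one kernel-verified Lean document; each statement's English description precedes it below -/
import Mathlib

section
/- Let N ≥ 2 and n ≥ 1 be integers, let 0 ≤ θ ≤ 1/2 and let σ ∈ ℝ satisfy θ + σ ≥ 1. Assume the vectors ω^1,…,ω^N ∈ ℝ^n and the symmetric matrices H^1,…,H^N ∈ ℝ^{n×n} satisfy Σ_{β=1}^N |ω^β|² ≤ 1 and Σ_{β=1}^N |H^β|² ≤ 1. Define J = |Σ_{β=1}^N H^β ω^β|², J₀ = Σ_{β=1}^N ⟨ω^β, Σ_{l=1}^N H^l ω^l⟩², and J₁ = Σ_{β=1}^N |H^β|². Then J − θ J₀ − σ J₁ ≤ 0 if θ ∈ [0, 1/3], and J − θ J₀ − σ J₁ ≤ max{0, (θ+1)²/(8θ) − σ} if θ ∈ (1/3, 1/2]. -/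
open Finset

/-!
Write `V = ∑ β, H β ω β`. Since `H β` is symmetric, `⟨H β ω β, V⟩` is the Frobenius product of `H β`
with the symmetrized outer product of `ω β` and `V`, whose squared norm is
`(|ω β|² |V|² + ⟨ω β, V⟩²) / 2`. Cauchy–Schwarz over all `β` together then gives
`J² ≤ J₁ (J + J₀) / 2`, and it remains to compare `(J - θ J₀) (J + J₀)` with a multiple of `J²`:
* `2 (1 - θ) J² - (J - θ J₀) (J + J₀) = (J - J₀) ((1 - 2 θ) J - θ J₀)`;
* `(θ + 1)² J² - 4 θ (J - θ J₀) (J + J₀) = ((1 - θ) J - 2 θ J₀)²`.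
-/

section SymmOuter

open scoped Matrix

/-- The symmetrized outer product `(v wᵀ + w vᵀ) / 2` of two real vectors, that is, the orthogonal
projection of `v wᵀ` to the symmetric matrices for the Frobenius inner product. -/
noncomputable def symmOuter {κ : Type*} (v w : κ → ℝ) : Matrix κ κ ℝ :=
  fun i j => (v i * w j + w i * v j) / 2

variable {ι κ : Type*} [Fintype ι] [Fintype κ]

lemma sum_mul_symmOuter_of_isSymm {A : Matrix κ κ ℝ} (hA : A.IsSymm) (v w : κ → ℝ) :
    ∑ i, ∑ j, A i j * symmOuter v w i j = (A *ᵥ v) ⬝ᵥ w := by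
  have expand (x y : κ → ℝ) : (A *ᵥ x) ⬝ᵥ y = ∑ i, ∑ j, A i j * (y i * x j) := by
    simp only [dotProduct, Matrix.mulVec, sum_mul]
    exact sum_congr rfl fun i _ => sum_congr rfl fun j _ => by ring
  have swap : (A *ᵥ w) ⬝ᵥ v = (A *ᵥ v) ⬝ᵥ w := by
    rw [dotProduct_comm, Matrix.dotProduct_mulVec, ← Matrix.mulVec_transpose, hA.eq]
  calc ∑ i, ∑ j, A i j * symmOuter v w i j
      = ((A *ᵥ w) ⬝ᵥ v + (A *ᵥ v) ⬝ᵥ w) / 2 := by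
        simp only [expand, ← sum_add_distrib, sum_div, symmOuter]
        exact sum_congr rfl fun i _ => sum_congr rfl fun j _ => by ring
    _ = (A *ᵥ v) ⬝ᵥ w := by rw [swap, add_self_div_two]

lemma sum_symmOuter_sq (v w : κ → ℝ) :
    ∑ i, ∑ j, symmOuter v w i j ^ 2 =
      ((∑ i, v i ^ 2) * (∑ i, w i ^ 2) + (v ⬝ᵥ w) ^ 2) / 2 := by
  calc ∑ i, ∑ j, symmOuter v w i j ^ 2
      = ((∑ i, ∑ j, v i ^ 2 * w j ^ 2) + (∑ i, ∑ j, w i ^ 2 * v j ^ 2)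
          + 2 * ∑ i, ∑ j, (v i * w i) * (v j * w j)) / 4 := by
        simp only [← sum_add_distrib, mul_sum, sum_div, symmOuter]
        exact sum_congr rfl fun i _ => sum_congr rfl fun j _ => by ring
    _ = ((∑ i, v i ^ 2) * (∑ i, w i ^ 2) + (v ⬝ᵥ w) ^ 2) / 2 := by
        simp only [← sum_mul_sum, dotProduct]
        ring

lemma sum_sum_sum_mul_sq_le {κ' : Type*} [Fintype κ'] (A B : ι → Matrix κ κ' ℝ) :
    (∑ β, ∑ i, ∑ j, A β i j * B β i j) ^ 2 ≤
      (∑ β, ∑ i, ∑ j, A β i j ^ 2) * ∑ β, ∑ i, ∑ j, B β i j ^ 2 := by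
  simpa only [Fintype.sum_prod_type] using
    sum_mul_sq_le_sq_mul_sq (univ : Finset (ι × κ × κ'))
      (fun p => A p.1 p.2.1 p.2.2) (fun p => B p.1 p.2.1 p.2.2)

lemma sum_mulVec_dotProduct_sq_le {H : ι → Matrix κ κ ℝ} (hsym : ∀ β, (H β).IsSymm)
    (ω : ι → κ → ℝ) (w : κ → ℝ) :
    (∑ β, (H β *ᵥ ω β) ⬝ᵥ w) ^ 2 ≤ (∑ β, ∑ i, ∑ j, H β i j ^ 2) *
      (((∑ β, ∑ i, ω β i ^ 2) * (∑ i, w i ^ 2) + ∑ β, (ω β ⬝ᵥ w) ^ 2) / 2) := by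
  have h := sum_sum_sum_mul_sq_le H fun β => symmOuter (ω β) w
  simpa only [sum_mul_symmOuter_of_isSymm (hsym _), sum_symmOuter_sq, ← sum_div, sum_add_distrib,
    ← sum_mul] using h

lemma sum_dotProduct_sq_le (ω : ι → κ → ℝ) (w : κ → ℝ) :
    ∑ β, (ω β ⬝ᵥ w) ^ 2 ≤ (∑ β, ∑ i, ω β i ^ 2) * ∑ i, w i ^ 2 := by
  rw [sum_mul]
  exact sum_le_sum fun β _ => sum_mul_sq_le_sq_mul_sq univ (ω β) w

end SymmOuter

section Scalar

variable {a b c k θ : ℝ}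

lemma sub_mul_le_mul_of_mul_add_le (ha : 0 ≤ a) (hb : 0 ≤ b) (hc : 0 ≤ c) (hk : 0 ≤ k)
    (hsq : a ^ 2 ≤ c * ((a + b) / 2)) (hquad : (a - θ * b) * (a + b) ≤ 2 * k * a ^ 2) :
    a - θ * b ≤ k * c := by
  rcases (add_nonneg ha hb).eq_or_lt' with hzero | hpos
  · obtain ⟨rfl, rfl⟩ := (add_eq_zero_iff_of_nonneg ha hb).mp hzero
    simpa using mul_nonneg hk hc
  · refine le_of_mul_le_mul_right ?_ hpos
    calc (a - θ * b) * (a + b) ≤ 2 * k * a ^ 2 := hquad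
      _ ≤ 2 * k * (c * ((a + b) / 2)) := by gcongr
      _ = k * c * (a + b) := by ring

lemma sub_mul_le_one_sub_mul (hb : 0 ≤ b) (hba : b ≤ a) (hc : 0 ≤ c)
    (hsq : a ^ 2 ≤ c * ((a + b) / 2)) (hθ : θ ≤ 1 / 3) :
    a - θ * b ≤ (1 - θ) * c := by
  refine sub_mul_le_mul_of_mul_add_le (hb.trans hba) hb hc (by linarith) hsq ?_
  have hfactor : 0 ≤ (1 - 2 * θ) * a - θ * b := by nlinarith
  linear_combination mul_nonneg (sub_nonneg.mpr hba) hfactor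

lemma sub_mul_le_sq_div_mul (ha : 0 ≤ a) (hb : 0 ≤ b) (hc : 0 ≤ c)
    (hsq : a ^ 2 ≤ c * ((a + b) / 2)) (hθ : 0 < θ) :
    a - θ * b ≤ (θ + 1) ^ 2 / (8 * θ) * c := by
  refine sub_mul_le_mul_of_mul_add_le ha hb hc (by positivity) hsq ?_
  have hcoeff : 2 * ((θ + 1) ^ 2 / (8 * θ)) * a ^ 2 = (θ + 1) ^ 2 * a ^ 2 / (4 * θ) := by
    field_simp
    ring
  rw [hcoeff, le_div_iff₀ (by positivity)]
  linear_combination sq_nonneg ((1 - θ) * a - 2 * θ * b)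

end Scalar

theorem algebra_lemma_general {ι κ : Type*} [Fintype ι] [Fintype κ] (θ σ : ℝ)
    (ω : ι → κ → ℝ) (H : ι → Matrix κ κ ℝ) (hsym : ∀ β, (H β).IsSymm)
    (hω : ∑ β, ∑ j, (ω β j) ^ 2 ≤ 1) :
    let V : κ → ℝ := fun i => ∑ β, (H β).mulVec (ω β) i;
    let J : ℝ := ∑ i, (V i) ^ 2;
    let J0 : ℝ := ∑ β, (∑ i, ω β i * V i) ^ 2;
    let J1 : ℝ := ∑ β, ∑ i, ∑ j, (H β i j) ^ 2;
    (θ ≤ 1 / 3 → 1 ≤ θ + σ → J - θ * J0 - σ * J1 ≤ 0) ∧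
      (0 < θ → J1 ≤ 1 → J - θ * J0 - σ * J1 ≤ max 0 ((θ + 1) ^ 2 / (8 * θ) - σ)) := by
  intro V J J0 J1
  have hJ : 0 ≤ J := by positivity
  have hJ0 : 0 ≤ J0 := by positivity
  have hJ1 : 0 ≤ J1 := by positivity
  have hωJ : (∑ β, ∑ j, ω β j ^ 2) * J ≤ J := mul_le_of_le_one_left hJ hω
  have hJ0J : J0 ≤ J := (sum_dotProduct_sq_le ω V).trans hωJ
  have hJ_eq : J = ∑ β, dotProduct ((H β).mulVec (ω β)) V := by
    simp only [J, sq, dotProduct, sum_comm (s := (univ : Finset ι)), ← sum_mul, V]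
  have hsq : J ^ 2 ≤ J1 * ((J + J0) / 2) := by
    calc J ^ 2 = (∑ β, dotProduct ((H β).mulVec (ω β)) V) ^ 2 := by rw [hJ_eq]
      _ ≤ J1 * (((∑ β, ∑ j, ω β j ^ 2) * J + J0) / 2) := sum_mulVec_dotProduct_sq_le hsym ω V
      _ ≤ J1 * ((J + J0) / 2) := by gcongr
  refine ⟨fun hθ hθσ => ?_, fun hθ hJ1_le => ?_⟩
  · have hbound := sub_mul_le_one_sub_mul hJ0 hJ0J hJ1 hsq hθ
    have hσ : (1 - θ) * J1 ≤ σ * J1 := by gcongr; linarith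
    linarith
  · calc J - θ * J0 - σ * J1 ≤ (θ + 1) ^ 2 / (8 * θ) * J1 - σ * J1 := by
          gcongr
          exact sub_mul_le_sq_div_mul hJ hJ0 hJ1 hsq hθ
      _ = J1 * ((θ + 1) ^ 2 / (8 * θ) - σ) := by ring
      _ ≤ J1 * max 0 ((θ + 1) ^ 2 / (8 * θ) - σ) := by gcongr; exact le_max_right _ _
      _ ≤ max 0 ((θ + 1) ^ 2 / (8 * θ) - σ) := mul_le_of_le_one_left (le_max_left _ _) hJ1_le

/-- Lemma 3.5 of the paper (algebraic lemma). -/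
theorem algebra_lemma (N n : ℕ) (hN : 2 ≤ N) (hn : 1 ≤ n)
    (θ σ : ℝ) (hθ0 : 0 ≤ θ) (hθhalf : θ ≤ 1/2) (hθσ : 1 ≤ θ + σ)
    (ω : Fin N → Fin n → ℝ) (H : Fin N → Matrix (Fin n) (Fin n) ℝ)
    (hsym : ∀ β, (H β).IsSymm)
    (hω : ∑ β, ∑ j, (ω β j) ^ 2 ≤ 1)
    (hH : ∑ β, ∑ i, ∑ j, (H β i j) ^ 2 ≤ 1) :
    let V : Fin n → ℝ := fun i => ∑ β, (H β).mulVec (ω β) i;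
    let J : ℝ := ∑ i, (V i) ^ 2;
    let J0 : ℝ := ∑ β, (∑ i, ω β i * V i) ^ 2;
    let J1 : ℝ := ∑ β, ∑ i, ∑ j, (H β i j) ^ 2;
    (θ ∈ Set.Icc (0:ℝ) (1/3) → J - θ * J0 - σ * J1 ≤ 0) ∧
      (θ ∈ Set.Ioc (1/3 : ℝ) (1/2) → J - θ * J0 - σ * J1 ≤ max 0 ((θ+1)^2/(8*θ) - σ)) := by
  obtain ⟨hsmall, hlarge⟩ := algebra_lemma_general θ σ ω H hsym hω
  exact ⟨fun hθ => hsmall hθ.2 hθσ, fun hθ => hlarge (lt_trans (by norm_num) hθ.1) hH⟩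
end

section
/- Let p ∈ (1, 3/2) and α ∈ ((p−2)/(3p−5), 1). Then 1 + (α(p−2) + p − 2 − α)²/(8α(p−2)) > 0 if and only if α < h(p), where h(p) = (2−p)(p + 2√(2(p−1)) + 1)/(p−3)². -/
/-!
Multiplied by `8 * α * (2 - p) > 0`, the expression `K_N(p, α)` becomes a concave quadratic in `α`,
whose roots are `(2 - p) * (p ± 2 * √(2 * (p - 1)) + 1) / (p - 3) ^ 2`. Hence `K_N(p, α) > 0`
exactly when `α` lies strictly between the roots. The bound `(p - 2) / (3 * p - 5) < α` already
places `α` above the smaller root, so only the comparison with the larger root `h(p)` remains.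
-/

/-- The quantity `K_N(p, α)` whose sign is to be determined. -/
noncomputable def KN (p α : ℝ) : ℝ :=
  1 + (α * (p - 2) + p - 2 - α) ^ 2 / (8 * α * (p - 2))

/-- The zero of `α ↦ KN p α` belonging to a square root `s` of `2 * (p - 1)`. Keeping `s` as an
argument treats both zeros at once: for `p < 2`, `√(2 * (p - 1))` gives the larger one, `h(p)`,
and `-√(2 * (p - 1))` the smaller one. -/
noncomputable def KNRoot (p s : ℝ) : ℝ :=
  (2 - p) * (p + 2 * s + 1) / (p - 3) ^ 2

section

variable {p s α : ℝ}

theorem KNRoot_add_KNRoot_neg (p s : ℝ) :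
    KNRoot p s + KNRoot p (-s) = 2 * (2 - p) * (p + 1) / (p - 3) ^ 2 := by
  unfold KNRoot
  ring

theorem KNRoot_mul_KNRoot_neg (hs : s ^ 2 = 2 * (p - 1)) (hp : p ≠ 3) :
    KNRoot p s * KNRoot p (-s) = (2 - p) ^ 2 / (p - 3) ^ 2 := by
  have hp' : p - 3 ≠ 0 := sub_ne_zero.mpr hp
  have conj : (p + 2 * s + 1) * (p + 2 * (-s) + 1) = (p - 3) ^ 2 := by
    linear_combination -4 * hs
  unfold KNRoot
  rw [div_mul_div_comm, mul_mul_mul_comm, conj]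
  field_simp

theorem KN_eq_mul_sub_KNRoot_div (hs : s ^ 2 = 2 * (p - 1)) (hp2 : p ≠ 2) (hp3 : p ≠ 3)
    (hα : α ≠ 0) :
    KN p α =
      (p - 3) ^ 2 * ((α - KNRoot p (-s)) * (KNRoot p s - α)) / (8 * α * (2 - p)) := by
  have hlead : (p - 3) ^ 2 ≠ 0 := pow_ne_zero 2 (sub_ne_zero.mpr hp3)
  have sum : (p - 3) ^ 2 * (KNRoot p s + KNRoot p (-s)) = 2 * (2 - p) * (p + 1) := by
    rw [KNRoot_add_KNRoot_neg, mul_div_cancel₀ _ hlead]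
  have prod : (p - 3) ^ 2 * (KNRoot p s * KNRoot p (-s)) = (2 - p) ^ 2 := by
    rw [KNRoot_mul_KNRoot_neg hs hp3, mul_div_cancel₀ _ hlead]
  have hden : 8 * α * (2 - p) ≠ 0 :=
    mul_ne_zero (by positivity) (sub_ne_zero.mpr hp2.symm)
  have hneg : 8 * α * (p - 2) = -(8 * α * (2 - p)) := by ring
  calc KN p α
      = (8 * α * (2 - p) - (α * (p - 2) + p - 2 - α) ^ 2) / (8 * α * (2 - p)) := by
        rw [KN, hneg, div_neg, ← sub_eq_add_neg, sub_div, div_self hden]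
    _ = (p - 3) ^ 2 * ((α - KNRoot p (-s)) * (KNRoot p s - α)) / (8 * α * (2 - p)) := by
        congr 1
        linear_combination prod - α * sum

theorem KNRoot_neg_le_KNRoot (hp : p ≤ 2) (hs : 0 ≤ s) : KNRoot p (-s) ≤ KNRoot p s := by
  have : 0 ≤ 2 - p := sub_nonneg.mpr hp
  unfold KNRoot
  gcongr
  linarith

theorem KN_pos_iff_mem_Ioo (hs₀ : 0 ≤ s) (hs : s ^ 2 = 2 * (p - 1)) (hp : p < 2) (hα : 0 < α) :
    0 < KN p α ↔ α ∈ Set.Ioo (KNRoot p (-s)) (KNRoot p s) := by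
  have hden : 0 < 8 * α * (2 - p) := mul_pos (by positivity) (sub_pos.mpr hp)
  have hlead : 0 < (p - 3) ^ 2 := sq_pos_of_neg (by linarith)
  have hroots : KNRoot p (-s) ≤ KNRoot p s := KNRoot_neg_le_KNRoot hp.le hs₀
  rw [KN_eq_mul_sub_KNRoot_div hs hp.ne (by linarith) hα.ne', div_pos_iff_of_pos_right hden,
    mul_pos_iff_of_pos_left hlead, mul_pos_iff, Set.mem_Ioo, sub_pos, sub_pos]
  refine or_iff_left ?_
  rintro ⟨below, above⟩
  linarith

theorem KNRoot_neg_le (hs : 0 ≤ s) (hp : p < 5 / 3) :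
    KNRoot p (-s) ≤ (p - 2) / (3 * p - 5) := by
  have hp2 : 0 ≤ 2 - p := by linarith
  have hp3 : 0 < (p - 3) ^ 2 := sq_pos_of_neg (by linarith)
  have hp5 : 0 < 5 - 3 * p := by linarith
  have cross : (p + 2 * (-s) + 1) * (5 - 3 * p) ≤ (p - 3) ^ 2 := by
    have : 0 ≤ 4 * (p - 1) ^ 2 + 2 * s * (5 - 3 * p) := by positivity
    linear_combination this
  calc KNRoot p (-s) = (2 - p) * ((p + 2 * (-s) + 1) / (p - 3) ^ 2) := mul_div_assoc _ _ _
    _ ≤ (2 - p) * (1 / (5 - 3 * p)) := by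
      refine mul_le_mul_of_nonneg_left ?_ hp2
      rwa [div_le_div_iff₀ hp3 hp5, one_mul]
    _ = (p - 2) / (3 * p - 5) := by
      rw [mul_one_div, ← neg_div_neg_eq, neg_sub, neg_sub]

theorem KN_pos_iff_general (hp1 : 1 ≤ p) (hp2 : p < 5 / 3) (hα : (p - 2) / (3 * p - 5) < α) :
    0 < KN p α ↔ α < KNRoot p √(2 * (p - 1)) := by
  have hs : √(2 * (p - 1)) ^ 2 = 2 * (p - 1) := Real.sq_sqrt (by linarith)
  have hα₀ : 0 < α := (div_pos_of_neg_of_neg (by linarith) (by linarith)).trans hα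
  have hlower : KNRoot p (-√(2 * (p - 1))) < α :=
    (KNRoot_neg_le (Real.sqrt_nonneg _) hp2).trans_lt hα
  rw [KN_pos_iff_mem_Ioo (Real.sqrt_nonneg _) hs (by linarith) hα₀, Set.mem_Ioo,
    and_iff_right hlower]

end

/-- Positivity of `K_N(p,α)` in the first case is equivalent to `α < h(p)`. -/
theorem KN_pos_iff (p α : ℝ) (hp1 : 1 < p) (hp2 : p < 3/2)
    (hα1 : (p - 2) / (3*p - 5) < α) (hα2 : α < 1) :
    0 < 1 + (α * (p - 2) + p - 2 - α)^2 / (8 * α * (p - 2)) ↔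
      α < (2 - p) * (p + 2 * Real.sqrt (2 * (p - 1)) + 1) / (p - 3)^2 :=
  KN_pos_iff_general hp1.le (by linarith) hα1
end

section
/- For every p ∈ (1, 3/2), one has h(p) > (p−2)/(3p−5), where h(p) = (2−p)(p + 2√(2(p−1)) + 1)/(p−3)². -/
/-!
Put `s = √(2(p - 1))`, so that `p = 1 + s² / 2`. Then `p + 2s + 1 = (2 + s)² / 2` and
`3 - p = (2 - s)(2 + s) / 2`, so the factor `(2 + s)²` cancels and
`h(p) = (2 - p) / ((2 - s)² / 2)`.
The threshold is `(2 - p) / (5 - 3p)` with `5 - 3p = (4 - 3s²) / 2`, and the two denominators differ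
by `(4 - 3s²) / 2 - (2 - s)² / 2 = 2s(1 - s)`, which is positive because `p < 3/2` means `s < 1`.
-/

section Field

variable {K : Type*} [Field K] [NeZero (2 : K)] {p s : K}

theorem add_two_mul_add_one_eq_sq_div_two (hs : s ^ 2 = 2 * (p - 1)) :
    p + 2 * s + 1 = (2 + s) ^ 2 / 2 := by
  rw [eq_div_iff two_ne_zero]
  linear_combination -hs

theorem sub_three_sq_eq_mul (hs : s ^ 2 = 2 * (p - 1)) :
    (p - 3) ^ 2 = (2 - s) ^ 2 / 2 * ((2 + s) ^ 2 / 2) := by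
  have three_sub_eq : 3 - p = (2 - s) * (2 + s) / 2 := by
    rw [eq_div_iff two_ne_zero]
    linear_combination hs
  calc (p - 3) ^ 2 = (3 - p) ^ 2 := by ring
    _ = ((2 - s) * (2 + s) / 2) ^ 2 := by rw [three_sub_eq]
    _ = (2 - s) ^ 2 / 2 * ((2 + s) ^ 2 / 2) := by ring

theorem two_sub_mul_div_sub_three_sq (hs : s ^ 2 = 2 * (p - 1)) (hs_ne : 2 + s ≠ 0) :
    (2 - p) * (p + 2 * s + 1) / (p - 3) ^ 2 = (2 - p) / ((2 - s) ^ 2 / 2) := by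
  rw [add_two_mul_add_one_eq_sq_div_two hs, sub_three_sq_eq_mul hs]
  exact mul_div_mul_right _ _ (div_ne_zero (pow_ne_zero 2 hs_ne) two_ne_zero)

end Field

theorem two_sub_sq_div_two_lt_five_sub_three_mul {K : Type*} [Field K] [LinearOrder K]
    [IsStrictOrderedRing K] {p s : K} (hs : s ^ 2 = 2 * (p - 1)) (hs_pos : 0 < s)
    (hs_lt : s < 1) : (2 - s) ^ 2 / 2 < 5 - 3 * p := by
  have denominator_gap : 5 - 3 * p - (2 - s) ^ 2 / 2 = 2 * s * (1 - s) := by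
    linear_combination (3 / 2) * hs
  have gap_pos : 0 < 2 * s * (1 - s) := mul_pos (by positivity) (sub_pos.mpr hs_lt)
  exact sub_pos.mp (denominator_gap ▸ gap_pos)

/-- For `p ∈ (1, 3/2)`, `h(p) > (p−2)/(3p−5)`. -/
theorem h_gt_threshold (p : ℝ) (hp1 : 1 < p) (hp2 : p < 3/2) :
    (p - 2) / (3*p - 5) < (2 - p) * (p + 2 * Real.sqrt (2 * (p - 1)) + 1) / (p - 3)^2 := by
  set s := Real.sqrt (2 * (p - 1))
  have hs : s ^ 2 = 2 * (p - 1) := Real.sq_sqrt (by linarith)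
  have hs_pos : 0 < s := Real.sqrt_pos.mpr (by linarith)
  have hs_lt : s < 1 := (Real.sqrt_lt' one_pos).mpr (by linarith)
  have denominator_pos : 0 < (2 - s) ^ 2 / 2 := half_pos (pow_pos (by linarith) 2)
  calc (p - 2) / (3 * p - 5) = (2 - p) / (5 - 3 * p) := by
        rw [← neg_div_neg_eq, neg_sub, neg_sub]
    _ < (2 - p) / ((2 - s) ^ 2 / 2) :=
        div_lt_div_of_pos_left (by linarith) denominator_pos
          (two_sub_sq_div_two_lt_five_sub_three_mul hs hs_pos hs_lt)
    _ = (2 - p) * (p + 2 * s + 1) / (p - 3) ^ 2 :=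
        (two_sub_mul_div_sub_three_sq hs (by positivity)).symm
end

section
/- Let n ≥ 1, N ≥ 1 be integers, let p > 2 and α ∈ [0,1), let ε > 0, let w^1,…,w^N ∈ ℝ^n be vectors and H^1,…,H^N ∈ ℝ^{n×n} be symmetric matrices. Set s = ε + Σ_{β=1}^N |w^β|² and V = Σ_{β=1}^N H^β w^β. Then Σ_{β=1}^N |H^β|² + (p−2−α) |V|²/s − α(p−2) (Σ_{k=1}^N ⟨w^k, V⟩²)/s² ≥ min{1, (p−1)(1−α)} · Σ_{β=1}^N |H^β|². -/
open Finset

/-!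
Write `h = ∑ |H^β|²`, `a = |V|² / s` and `b = ∑ ⟨w^k, V⟩² / s²`. Two applications of Cauchy–Schwarz
give `b ≤ a ≤ h`. Replacing `b` by `a` bounds the left-hand side from below by
`1 * (h - a) + (p - 1) * (1 - α) * a`, because `1 + (p - 2 - α) - α * (p - 2) = (p - 1) * (1 - α)`,
and both `h - a` and `a` are nonnegative.
-/

section CauchySchwarz

variable {R ι m n : Type*} [CommRing R] [LinearOrder R] [IsStrictOrderedRing R]
  [Fintype ι] [Fintype m] [Fintype n]

theorem sum_sq_sum_mulVec_le (H : ι → Matrix m n R) (w : ι → n → R) :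
    ∑ i, (∑ β, (H β).mulVec (w β) i) ^ 2 ≤
      (∑ β, ∑ i, ∑ j, H β i j ^ 2) * ∑ β, ∑ j, w β j ^ 2 := by
  rw [sum_comm, sum_mul]
  refine sum_le_sum fun i _ => ?_
  have row_le := sum_mul_sq_le_sq_mul_sq (univ : Finset (ι × n))
    (fun x => H x.1 i x.2) (fun x => w x.1 x.2)
  simpa only [Fintype.sum_prod_type, Matrix.mulVec, dotProduct] using row_le

theorem sum_sq_sum_mul_le (w : ι → n → R) (v : n → R) :
    ∑ k, (∑ i, w k i * v i) ^ 2 ≤ (∑ k, ∑ i, w k i ^ 2) * ∑ i, v i ^ 2 := by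
  rw [sum_mul]
  exact sum_le_sum fun k _ => sum_mul_sq_le_sq_mul_sq univ (w k) v

end CauchySchwarz

section Scalar

variable {R : Type*} [CommRing R] [LinearOrder R] [IsStrictOrderedRing R]

theorem min_mul_le_mul_sub_add_mul {a h : R} (x y : R) (ha : 0 ≤ a) (hah : a ≤ h) :
    min x y * h ≤ x * (h - a) + y * a :=
  calc min x y * h = min x y * (h - a) + min x y * a := by ring
    _ ≤ x * (h - a) + y * a :=
      add_le_add (mul_le_mul_of_nonneg_right (min_le_left x y) (sub_nonneg.2 hah))
        (mul_le_mul_of_nonneg_right (min_le_right x y) ha)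

theorem min_one_mul_le_add_sub {p α h a b : R} (hpα : 0 ≤ α * (p - 2))
    (ha : 0 ≤ a) (hah : a ≤ h) (hba : b ≤ a) :
    min 1 ((p - 1) * (1 - α)) * h ≤ h + (p - 2 - α) * a - α * (p - 2) * b :=
  calc min 1 ((p - 1) * (1 - α)) * h
      ≤ 1 * (h - a) + (p - 1) * (1 - α) * a := min_mul_le_mul_sub_add_mul _ _ ha hah
    _ = h + (p - 2 - α) * a - α * (p - 2) * a := by ring
    _ ≤ h + (p - 2 - α) * a - α * (p - 2) * b :=
      sub_le_sub_left (mul_le_mul_of_nonneg_left hba hpα) _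

end Scalar

theorem pointwise_bound_p_gt_two_general {K ι n : Type*}
    [Field K] [LinearOrder K] [IsStrictOrderedRing K] [Fintype ι] [Fintype n]
    {p α s : K} (hpα : 0 ≤ α * (p - 2)) (w : ι → n → K) (H : ι → Matrix n n K)
    (hs : 0 < s) (hws : ∑ β, ∑ j, w β j ^ 2 ≤ s) :
    let V : n → K := fun i => ∑ β, (H β).mulVec (w β) i
    min 1 ((p - 1) * (1 - α)) * ∑ β, ∑ i, ∑ j, H β i j ^ 2 ≤
      (∑ β, ∑ i, ∑ j, H β i j ^ 2) + (p - 2 - α) * (∑ i, V i ^ 2) / s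
        - α * (p - 2) * (∑ k, (∑ i, w k i * V i) ^ 2) / s ^ 2 := by
  intro V
  have hV : 0 ≤ ∑ i, V i ^ 2 := by positivity
  have hH : 0 ≤ ∑ β, ∑ i, ∑ j, H β i j ^ 2 := by positivity
  have hVH : (∑ i, V i ^ 2) / s ≤ ∑ β, ∑ i, ∑ j, H β i j ^ 2 :=
    (div_le_iff₀ hs).2 <|
      (sum_sq_sum_mulVec_le H w).trans (mul_le_mul_of_nonneg_left hws hH)
  have hwV : (∑ k, (∑ i, w k i * V i) ^ 2) / s ^ 2 ≤ (∑ i, V i ^ 2) / s :=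
    calc (∑ k, (∑ i, w k i * V i) ^ 2) / s ^ 2
        ≤ s * (∑ i, V i ^ 2) / s ^ 2 := by
          gcongr
          exact (sum_sq_sum_mul_le w V).trans (mul_le_mul_of_nonneg_right hws hV)
      _ = (∑ i, V i ^ 2) / s := by rw [sq s, mul_div_mul_left _ _ hs.ne']
  rw [mul_div_assoc, mul_div_assoc]
  exact min_one_mul_le_add_sub hpα (div_nonneg hV hs.le) hVH hwV

/-- Pointwise lower bound for `p > 2`. -/
theorem pointwise_bound_p_gt_two (n N : ℕ) (hn : 1 ≤ n) (hN : 1 ≤ N)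
    (p α ε : ℝ) (hp : 2 < p) (hα0 : 0 ≤ α) (hα1 : α < 1) (hε : 0 < ε)
    (w : Fin N → Fin n → ℝ) (H : Fin N → Matrix (Fin n) (Fin n) ℝ)
    (hsym : ∀ β, (H β).IsSymm) :
    let s : ℝ := ε + ∑ β, ∑ j, (w β j) ^ 2;
    let V : Fin n → ℝ := fun i => ∑ β, (H β).mulVec (w β) i;
    (∑ β, ∑ i, ∑ j, (H β i j) ^ 2) + (p - 2 - α) * (∑ i, (V i) ^ 2) / s
        - α * (p - 2) * (∑ k, (∑ i, w k i * V i) ^ 2) / s ^ 2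
      ≥ min 1 ((p - 1) * (1 - α)) * ∑ β, ∑ i, ∑ j, (H β i j) ^ 2 :=
  pointwise_bound_p_gt_two_general (mul_nonneg hα0 (sub_nonneg.2 hp.le)) w H
    (by positivity) (le_add_of_nonneg_left hε.le)
end
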